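/- arXiv:2002.05240 — 3 statements merged into one kernel-verified Lean document; each statement's English description precedes it below -/
import Mathlib

section
/- Fix an integer k ≥ 2, an integer n ≥ 1, and battlefield values v_1,…,v_n > 0 with V = Σ_{j=1}^n v_j. Suppose there is a partition function π : [n] → [k] such that Σ_{j ∈ π^{-1}(m)} v_j = V/k for every m ∈ [k]. Then there exists a probability measure μ on ℝ^n such that: (i) μ-almost surely every coordinate A_j is nonnegative and Σ_{j=1}^n A_j = 1; (ii) for every j ∈ [n] and x ≥ 0, μ{A : A_j ≤ x} = min(1, (V·x/(k·v_j))^{1/(k-1)}); and (iii) if all k players independently sample their bid vectors from μ, they are in Nash equilibrium: for every probability measure ν on ℝ^n that is almost surely nonnegative with coordinate sum at most 1, the expected payoff of a single player drawing from ν while the other k−1 players draw independently from μ is at most V/k, which is the expected payoff each player receives under symmetric play of μ. -/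
open MeasureTheory

open Classical in
/-- Colonel Blotto payoff: each battlefield's value is split evenly among
the players tied for the highest bid on it. -/
noncomputable def blottoPayoff {k n : ℕ} (v : Fin n → ℝ) (A : Fin k → Fin n → ℝ)
    (i : Fin k) : ℝ :=
  ∑ j, if ∀ i', A i' j ≤ A i j then
      v j / ((Finset.univ.filter fun i' : Fin k => ∀ i'', A i'' j ≤ A i' j).card : ℝ)
    else 0

/-- The strategy profile where player `i₀` plays `ν` and everyone else plays `μ`. -/
noncomputable def devFamily {α : Type*} [MeasurableSpace α] {k : ℕ} (i₀ : Fin k)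
    (μ ν : Measure α) : Fin k → Measure α :=
  fun i => if i = i₀ then ν else μ

theorem devFamily_prob {α : Type*} [MeasurableSpace α] {k : ℕ} (i₀ : Fin k)
    (μ ν : Measure α) (hμ : IsProbabilityMeasure μ) (hν : IsProbabilityMeasure ν) :
    ∀ i, IsProbabilityMeasure (devFamily i₀ μ ν i) := by
  intro i
  unfold devFamily
  split <;> assumption

/-- Expected payoff of player `i` when each player `i'` independently samples its
bid vector from `P i'`. -/
noncomputable def expectedPayoff {k n : ℕ} (v : Fin n → ℝ)
    (P : Fin k → Measure (Fin n → ℝ)) (hP : ∀ i, IsProbabilityMeasure (P i))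
    (i : Fin k) : ℝ :=
  haveI := hP
  ∫ A, blottoPayoff v A i ∂(Measure.pi P)

section

open ProbabilityTheory

theorem measurable_gammaPDF (a r : ℝ) : Measurable (gammaPDF a r) :=
  (measurable_gammaPDFReal a r).ennreal_ofReal

theorem ae_pos_gammaMeasure (a r : ℝ) : ∀ᵐ x ∂gammaMeasure a r, 0 < x := by
  rw [gammaMeasure, ae_withDensity_iff (measurable_gammaPDF a r)]
  have h0 : ∀ᵐ x : ℝ, x ≠ 0 := by simp [ae_iff]
  filter_upwards [h0] with x hx h
  by_contra hlt
  exact h (gammaPDF_of_neg (lt_of_le_of_ne (not_lt.1 hlt) hx))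

theorem lintegral_exp_neg_mul_gammaMeasure {a s : ℝ} (ha : 0 < a) (hs : -1 < s) :
    ∫⁻ x, ENNReal.ofReal (Real.exp (-(s * x))) ∂gammaMeasure a 1 =
      ENNReal.ofReal ((1 + s) ^ (-a)) := by
  have hs1 : 0 < 1 + s := by linarith
  rw [gammaMeasure, lintegral_withDensity_eq_lintegral_mul _
    (measurable_gammaPDF a 1) (by fun_prop)]
  have h (x : ℝ) : (gammaPDF a 1 * fun x => ENNReal.ofReal (Real.exp (-(s * x)))) x =
      ENNReal.ofReal ((1 + s) ^ (-a)) * gammaPDF a (1 + s) x := by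
    rcases lt_or_ge x 0 with hx | hx
    · simp [gammaPDF_of_neg hx]
    · have hG := Real.Gamma_pos_of_pos ha
      rw [Pi.mul_apply, gammaPDF_of_nonneg hx, gammaPDF_of_nonneg hx,
        ← ENNReal.ofReal_mul (by positivity), ← ENNReal.ofReal_mul (by positivity)]
      have h1 : Real.exp (-((1 + s) * x)) = Real.exp (-(1 * x)) * Real.exp (-(s * x)) := by
        rw [← Real.exp_add]; ring_nf
      have h2 : (1 + s) ^ (-a) * (1 + s) ^ a = 1 := by
        rw [← Real.rpow_add hs1]; simp
      rw [h1, Real.one_rpow]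
      congr 1
      linear_combination (-1 / Real.Gamma a * x ^ (a - 1) * Real.exp (-(1 * x)) *
        Real.exp (-(s * x))) * h2
  simp_rw [h]
  rw [lintegral_const_mul _ (measurable_gammaPDF a _),
    lintegral_gammaPDF_eq_one ha hs1, mul_one]

theorem exp_mul_integrable_and_integral_gammaMeasure {a t : ℝ} (ha : 0 < a) (ht : t < 1) :
    Integrable (fun x => Real.exp (t * x)) (gammaMeasure a 1) ∧
      ∫ x, Real.exp (t * x) ∂gammaMeasure a 1 = (1 - t) ^ (-a) := by
  have h := lintegral_exp_neg_mul_gammaMeasure ha (s := -t) (by linarith)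
  simp only [neg_mul, neg_neg, ← sub_eq_add_neg] at h
  refine ⟨⟨by fun_prop, ?_⟩, ?_⟩
  · rw [hasFiniteIntegral_iff_ofReal (ae_of_all _ fun x => (Real.exp_pos _).le), h]
    exact ENNReal.ofReal_lt_top
  · rw [integral_eq_lintegral_of_nonneg_ae (ae_of_all _ fun x => (Real.exp_pos _).le)
      (by fun_prop), h, ENNReal.toReal_ofReal (Real.rpow_nonneg (by linarith) _)]

theorem charFun_gammaMeasure {a : ℝ} (ha : 0 < a) (t : ℝ) :
    charFun (gammaMeasure a 1) t = (1 - t * Complex.I) ^ (-a : ℂ) := by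
  have hsub : Set.Iio 1 ⊆ integrableExpSet id (gammaMeasure a 1) := fun s hs =>
    (exp_mul_integrable_and_integral_gammaMeasure ha hs).1
  have hX : AnalyticOnNhd ℂ (complexMGF id (gammaMeasure a 1)) {z | z.re < 1} :=
    analyticOnNhd_complexMGF.mono fun z (hz : z.re < 1) =>
      interior_maximal hsub isOpen_Iio hz
  have hY : AnalyticOnNhd ℂ (fun z : ℂ => (1 - z) ^ (-a : ℂ)) {z | z.re < 1} := by
    intro z hz
    refine AnalyticAt.cpow (by fun_prop) (by fun_prop) (Or.inl ?_)
    simpa using hz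
  have heq : Set.EqOn (complexMGF id (gammaMeasure a 1)) (fun z : ℂ => (1 - z) ^ (-a : ℂ))
      {z | z.re < 1} := by
    refine AnalyticOnNhd.eqOn_of_preconnected_of_frequently_eq hX hY
      (convex_halfSpace_re_lt 1).isPreconnected (z₀ := 0) (by simp) ?_
    have hreal : ∃ᶠ x : ℝ in nhdsWithin 0 {0}ᶜ,
        complexMGF id (gammaMeasure a 1) x = (1 - (x : ℂ)) ^ (-a : ℂ) := by
      refine Filter.Eventually.frequently ?_
      filter_upwards [nhdsWithin_le_nhds (Iio_mem_nhds (zero_lt_one' ℝ))] with x hx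
      have hx' : x < 1 := hx
      rw [complexMGF_ofReal, mgf]
      simp only [id]
      rw [(exp_mul_integrable_and_integral_gammaMeasure ha hx').2,
        Complex.ofReal_cpow (by linarith)]
      push_cast
      rfl
    have htend : Filter.Tendsto (fun x : ℝ => (x : ℂ)) (nhdsWithin 0 {0}ᶜ)
        (nhdsWithin 0 {0}ᶜ) := by
      refine tendsto_nhdsWithin_iff.2 ⟨?_, ?_⟩
      · exact (Complex.continuous_ofReal.tendsto' 0 0 (by simp)).mono_left nhdsWithin_le_nhds
      · filter_upwards [self_mem_nhdsWithin] with x hx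
        simpa using hx
    exact htend.frequently hreal
  rw [← complexMGF_id_mul_I]
  exact heq (by simp)

theorem expMeasure_Ici {x : ℝ} (hx : 0 ≤ x) :
    expMeasure 1 (Set.Ici x) = ENNReal.ofReal (Real.exp (-x)) := by
  have : IsProbabilityMeasure (expMeasure 1) := isProbabilityMeasure_expMeasure one_pos
  have : NullSingletonClass (expMeasure 1) := nullSingletonClass_withDensity _
  have h := cdf_expMeasure_eq one_pos x
  rw [cdf_eq_real, if_pos hx, one_mul] at h
  rw [← measure_congr Ioi_ae_eq_Ici, ← Set.compl_Iic, ← ofReal_measureReal,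
    probReal_compl_eq_one_sub measurableSet_Iic, h]
  ring_nf

theorem map_sum_gammaMeasure {ι : Type*} [Fintype ι] {a : ℝ} (ha : 0 < a) (s : Finset ι)
    (hs : s.card * a = 1) :
    (Measure.pi fun _ : ι => gammaMeasure a 1).map (∑ i ∈ s, fun g => g i) = expMeasure 1 := by
  have := isProbabilityMeasure_gammaMeasure ha one_pos
  have : IsProbabilityMeasure (expMeasure 1) := isProbabilityMeasure_expMeasure one_pos
  have hind : iIndepFun (fun (i : ι) (g : ι → ℝ) => g i)
      (Measure.pi fun _ : ι => gammaMeasure a 1) :=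
    iIndepFun_pi (X := fun _ => id) fun _ => aemeasurable_id
  have : IsProbabilityMeasure
      ((Measure.pi fun _ : ι => gammaMeasure a 1).map (∑ i ∈ s, fun g => g i)) :=
    Measure.isProbabilityMeasure_map (by fun_prop)
  refine Measure.ext_of_charFun ?_
  rw [iIndepFun.charFun_map_finsetSum_eq_prod (fun i _ => (measurable_pi_apply i).aemeasurable)
    (hind.precomp (g := ((↑) : s → ι)) Subtype.val_injective)]
  ext t
  have he (i : ι) : (Measure.pi fun _ : ι => gammaMeasure a 1).map (fun g => g i) =
      gammaMeasure a 1 := (measurePreserving_eval (fun _ : ι => gammaMeasure a 1) i).map_eq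
  have h1 := charFun_gammaMeasure one_pos t
  simp only [he, Finset.prod_const, Pi.pow_apply, charFun_gammaMeasure ha, expMeasure, h1,
    ← Complex.cpow_nat_mul]
  congr 1
  simpa using congrArg (fun x : ℝ => -(x : ℂ)) hs

theorem gamma_mul_le_sum {ι : Type*} [Fintype ι] [DecidableEq ι] {a s : ℝ} (ha : 0 < a)
    (hs : 0 ≤ s) (m : ι) (hcard : ((Finset.univ.erase m).card : ℝ) * a = 1) :
    (Measure.pi fun _ : ι => gammaMeasure a 1)
      {g | s * g m ≤ ∑ i ∈ Finset.univ.erase m, g i} = ENNReal.ofReal ((1 + s) ^ (-a)) := by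
  have := isProbabilityMeasure_gammaMeasure ha one_pos
  have : IsProbabilityMeasure (expMeasure 1) := isProbabilityMeasure_expMeasure one_pos
  have hind : iIndepFun (fun (i : ι) (g : ι → ℝ) => g i)
      (Measure.pi fun _ : ι => gammaMeasure a 1) :=
    iIndepFun_pi (X := fun _ => id) fun _ => aemeasurable_id
  have hpair := hind.indepFun_finsetSum_of_notMem (fun i => measurable_pi_apply i)
    (Finset.notMem_erase m Finset.univ)
  rw [indepFun_iff_map_prod_eq_prod_map_map (by fun_prop)
    (measurable_pi_apply m).aemeasurable, map_sum_gammaMeasure ha _ hcard,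
    show (Measure.pi fun _ : ι => gammaMeasure a 1).map (fun g => g m) = gammaMeasure a 1 from
      (measurePreserving_eval (fun _ : ι => gammaMeasure a 1) m).map_eq] at hpair
  have hS : MeasurableSet {p : ℝ × ℝ | s * p.2 ≤ p.1} :=
    measurableSet_le (by fun_prop) (by fun_prop)
  have hpre : {g : ι → ℝ | s * g m ≤ ∑ i ∈ Finset.univ.erase m, g i} =
      (fun g => ((∑ i ∈ Finset.univ.erase m, fun g : ι → ℝ => g i) g, g m)) ⁻¹'
        {p : ℝ × ℝ | s * p.2 ≤ p.1} := by
    ext g; simp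
  rw [hpre, ← Measure.map_apply (by fun_prop) hS, hpair, Measure.prod_apply_symm hS,
    ← lintegral_exp_neg_mul_gammaMeasure ha (by linarith : -1 < s)]
  refine lintegral_congr_ae ?_
  filter_upwards [ae_pos_gammaMeasure a 1] with x hx
  have h0 : 0 ≤ s * x := by positivity
  exact expMeasure_Ici h0

/-- Witnessed by the symmetric Dirichlet distribution with parameters `1 / (k - 1)`, whose marginals
are `Beta (1 / (k - 1)) 1`. -/
theorem exists_simplex_measure {k : ℕ} (hk : 2 ≤ k) :
    ∃ Q : Measure (Fin k → ℝ), IsProbabilityMeasure Q ∧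
      (∀ᵐ X ∂Q, (∀ m, 0 ≤ X m) ∧ ∑ m, X m = 1) ∧
      ∀ m, ∀ y : ℝ, 0 ≤ y →
        Q {X | X m ≤ y} = ENNReal.ofReal (min 1 (y ^ ((1 : ℝ) / ((k : ℝ) - 1)))) := by
  have hk1 : (0 : ℝ) < (k : ℝ) - 1 := by
    have : (2 : ℝ) ≤ k := by exact_mod_cast hk
    linarith
  set a : ℝ := 1 / ((k : ℝ) - 1) with ha_def
  have ha : 0 < a := by positivity
  have := isProbabilityMeasure_gammaMeasure ha one_pos
  have hm : Measurable fun (g : Fin k → ℝ) (m : Fin k) => g m / ∑ i, g i := by fun_prop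
  have hpos : ∀ᵐ g ∂(Measure.pi fun _ : Fin k => gammaMeasure a 1), ∀ i, 0 < g i := by
    rw [ae_all_iff]
    exact fun i => (measurePreserving_eval (fun _ : Fin k => gammaMeasure a 1)
      i).quasiMeasurePreserving.ae (ae_pos_gammaMeasure a 1)
  have : Nonempty (Fin k) := ⟨⟨0, by omega⟩⟩
  have hsum {g : Fin k → ℝ} (hg : ∀ i, 0 < g i) : 0 < ∑ i, g i :=
    Finset.sum_pos (fun i _ => hg i) Finset.univ_nonempty
  refine ⟨(Measure.pi fun _ : Fin k => gammaMeasure a 1).map fun g m => g m / ∑ i, g i,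
    Measure.isProbabilityMeasure_map hm.aemeasurable, ?_, fun m y hy => ?_⟩
  · rw [ae_map_iff hm.aemeasurable (by measurability)]
    filter_upwards [hpos] with g hg
    exact ⟨fun m => (div_pos (hg m) (hsum hg)).le, by
      rw [← Finset.sum_div, div_self (hsum hg).ne']⟩
  · rw [Measure.map_apply hm (measurableSet_le (by fun_prop) (by fun_prop))]
    rcases le_or_gt 1 y with h1 | h1
    · rw [min_eq_left (Real.one_le_rpow h1 ha.le), ENNReal.ofReal_one, ← mem_ae_iff_prob_eq_one
        (hm (measurableSet_le (by fun_prop) (by fun_prop)))]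
      filter_upwards [hpos] with g hg
      refine le_trans ?_ h1
      exact (div_le_one (hsum hg)).2
        (Finset.single_le_sum (fun i _ => (hg i).le) (Finset.mem_univ m))
    rw [min_eq_right (Real.rpow_le_one hy h1.le ha.le)]
    rcases hy.eq_or_lt with rfl | hy0
    · rw [Real.zero_rpow ha.ne', ENNReal.ofReal_zero]
      refine measure_eq_zero_iff_ae_notMem.2 ?_
      filter_upwards [hpos] with g hg
      simpa using div_pos (hg m) (hsum hg)
    have hcard : ((Finset.univ.erase m).card : ℝ) * a = 1 := by
      rw [Finset.card_erase_of_mem (Finset.mem_univ m), Finset.card_univ, Fintype.card_fin,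
        Nat.cast_sub (by omega), Nat.cast_one, ha_def]
      field_simp
    have hs : 0 ≤ (1 - y) / y := div_nonneg (by linarith) hy
    have hy' : (1 + (1 - y) / y) ^ (-a) = y ^ a := by
      rw [show 1 + (1 - y) / y = y⁻¹ by field_simp; ring, Real.inv_rpow hy, Real.rpow_neg hy,
        inv_inv]
    rw [← hy', ← gamma_mul_le_sum ha hs m hcard]
    refine measure_congr ?_
    filter_upwards [hpos] with g hg
    refine propext ?_
    change g m / ∑ i, g i ≤ y ↔ (1 - y) / y * g m ≤ ∑ i ∈ Finset.univ.erase m, g i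
    rw [div_le_iff₀ (hsum hg), div_mul_eq_mul_div, div_le_iff₀ hy0,
      ← Finset.add_sum_erase _ _ (Finset.mem_univ m)]
    constructor <;> intro h <;> linarith

theorem blottoPayoff_nonneg {k n : ℕ} {v : Fin n → ℝ} (hv : ∀ j, 0 < v j)
    (A : Fin k → Fin n → ℝ) (i : Fin k) : 0 ≤ blottoPayoff v A i := by
  refine Finset.sum_nonneg fun j _ => ?_
  have := (hv j).le
  split_ifs <;> positivity

open Classical in
theorem blottoPayoff_le {k n : ℕ} {v : Fin n → ℝ} (hv : ∀ j, 0 < v j)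
    (A : Fin k → Fin n → ℝ) (i : Fin k) :
    blottoPayoff v A i ≤ ∑ j, if ∀ i', A i' j ≤ A i j then v j else 0 := by
  refine Finset.sum_le_sum fun j _ => ?_
  split_ifs with h
  · refine div_le_self (hv j).le ?_
    rw [Nat.one_le_cast, Nat.one_le_iff_ne_zero]
    exact Finset.card_ne_zero_of_mem (Finset.mem_filter.2 ⟨Finset.mem_univ i, h⟩)
  · exact le_rfl

theorem sum_blottoPayoff {k n : ℕ} (hk : 0 < k) (v : Fin n → ℝ) (A : Fin k → Fin n → ℝ) :
    ∑ i, blottoPayoff v A i = ∑ j, v j := by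
  classical
  have : Nonempty (Fin k) := ⟨⟨0, hk⟩⟩
  simp only [blottoPayoff]
  rw [Finset.sum_comm]
  refine Finset.sum_congr rfl fun j _ => ?_
  obtain ⟨i, -, hi⟩ := Finset.exists_max_image Finset.univ (fun i => A i j) Finset.univ_nonempty
  have hcard : ((Finset.univ.filter fun i' : Fin k => ∀ i'', A i'' j ≤ A i' j).card : ℝ) ≠ 0 :=
    Nat.cast_ne_zero.2 (Finset.card_ne_zero_of_mem
      (Finset.mem_filter.2 ⟨Finset.mem_univ i, fun i' => hi i' (Finset.mem_univ i')⟩))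
  rw [← Finset.sum_filter, Finset.sum_const, nsmul_eq_mul]
  convert mul_div_cancel₀ (v j) hcard using 1

theorem measurableSet_forall_le {k n : ℕ} (i : Fin k) (j : Fin n) :
    MeasurableSet {A : Fin k → Fin n → ℝ | ∀ i', A i' j ≤ A i j} := by
  rw [Set.ofPred_forall]
  exact MeasurableSet.iInter fun i' => measurableSet_le (by fun_prop) (by fun_prop)

theorem measurable_blottoPayoff {k n : ℕ} (v : Fin n → ℝ) (i : Fin k) :
    Measurable fun A : Fin k → Fin n → ℝ => blottoPayoff v A i := by
  classical
  refine Finset.measurable_sum _ fun j _ => Measurable.ite (measurableSet_forall_le i j) ?_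
    measurable_const
  simp only [Finset.card_filter, Nat.cast_sum, Nat.cast_ite, Nat.cast_one, Nat.cast_zero]
  refine measurable_const.div (Finset.measurable_sum _ fun i' _ =>
    Measurable.ite (measurableSet_forall_le i' j) measurable_const measurable_const)

theorem integrable_blottoPayoff {k n : ℕ} {v : Fin n → ℝ} (hv : ∀ j, 0 < v j)
    (P : Measure (Fin k → Fin n → ℝ)) [IsFiniteMeasure P] (i : Fin k) :
    Integrable (fun A => blottoPayoff v A i) P := by
  classical
  refine Integrable.of_bound (measurable_blottoPayoff v i).aestronglyMeasurable (∑ j, v j)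
    (ae_of_all _ fun A => ?_)
  rw [Real.norm_of_nonneg (blottoPayoff_nonneg hv A i)]
  refine (blottoPayoff_le hv A i).trans (Finset.sum_le_sum fun j _ => ?_)
  split_ifs
  exacts [le_rfl, (hv j).le]

theorem measure_pi_forall_le {k n : ℕ} (μ ν : Measure (Fin n → ℝ)) [hμ : IsProbabilityMeasure μ]
    [hν : IsProbabilityMeasure ν] (i₀ : Fin k) (j : Fin n) :
    Measure.pi (devFamily i₀ μ ν) {A | ∀ i', A i' j ≤ A i₀ j} =
      ∫⁻ b, μ {A | A j ≤ b j} ^ (k - 1) ∂ν := by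
  obtain _ | k := k
  · exact i₀.elim0
  have := devFamily_prob i₀ μ ν hμ hν
  have hmp := measurePreserving_piFinSuccAbove (devFamily i₀ μ ν) i₀
  have hS : MeasurableSet {p : (Fin n → ℝ) × (Fin k → Fin n → ℝ) | ∀ i', p.2 i' j ≤ p.1 j} := by
    rw [Set.ofPred_forall]
    exact MeasurableSet.iInter fun i' => measurableSet_le (by fun_prop) (by fun_prop)
  have hpre : {A : Fin (k + 1) → Fin n → ℝ | ∀ i', A i' j ≤ A i₀ j} =
      MeasurableEquiv.piFinSuccAbove (fun _ => Fin n → ℝ) i₀ ⁻¹' {p | ∀ i', p.2 i' j ≤ p.1 j} := by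
    ext A
    simp [Fin.forall_iff_succAbove i₀, MeasurableEquiv.piFinSuccAbove_apply, Fin.removeNth]
  rw [hpre, hmp.measure_preimage hS.nullMeasurableSet, Measure.prod_apply hS]
  simp only [devFamily, Fin.succAbove_ne, if_true, if_false]
  refine lintegral_congr fun b => ?_
  have : Prod.mk b ⁻¹' {p : (Fin n → ℝ) × (Fin k → Fin n → ℝ) | ∀ i', p.2 i' j ≤ p.1 j} =
      Set.univ.pi fun _ => {A | A j ≤ b j} := by
    ext; simp
  rw [this, Measure.pi_pi]
  simp

theorem expectedPayoff_dev_le {k n : ℕ} (hk : 2 ≤ k) {v : Fin n → ℝ} (hv : ∀ j, 0 < v j)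
    (μ ν : Measure (Fin n → ℝ)) (hμ : IsProbabilityMeasure μ) (hν : IsProbabilityMeasure ν)
    (hcdf : ∀ j, ∀ x : ℝ, 0 ≤ x → μ {A : Fin n → ℝ | A j ≤ x} = ENNReal.ofReal (min 1
      (((∑ l, v l) * x / ((k : ℝ) * v j)) ^ ((1 : ℝ) / ((k : ℝ) - 1)))))
    (hbudget : ∀ᵐ A ∂ν, (∀ j, 0 ≤ A j) ∧ ∑ j, A j ≤ 1) (i₀ : Fin k) :
    expectedPayoff v (devFamily i₀ μ ν) (devFamily_prob i₀ μ ν hμ hν) i₀ ≤ (∑ l, v l) / k := by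
  classical
  have := devFamily_prob i₀ μ ν hμ hν
  have hV : 0 ≤ ∑ l, v l := Finset.sum_nonneg fun j _ => (hv j).le
  have hk0 : (0 : ℝ) < k := by exact_mod_cast (by omega : 0 < k)
  have hpow {j : Fin n} {x : ℝ} (hx : 0 ≤ x) : ENNReal.ofReal (v j) *
      μ {A : Fin n → ℝ | A j ≤ x} ^ (k - 1) ≤ ENNReal.ofReal ((∑ l, v l) / k * x) := by
    have hvj := hv j
    have hq : 0 ≤ (∑ l, v l) * x / (k * v j) := by positivity
    have hr := Real.rpow_nonneg hq (1 / ((k : ℝ) - 1))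
    rw [hcdf j x hx, ← ENNReal.ofReal_pow (le_min zero_le_one hr), ← ENNReal.ofReal_mul hvj.le]
    refine ENNReal.ofReal_le_ofReal ?_
    calc v j * min 1 (((∑ l, v l) * x / (k * v j)) ^ ((1 : ℝ) / ((k : ℝ) - 1))) ^ (k - 1)
        ≤ v j * (((∑ l, v l) * x / (k * v j)) ^ ((1 : ℝ) / ((k : ℝ) - 1))) ^ (k - 1) := by
          gcongr
          exact min_le_right _ _
      _ = (∑ l, v l) / k * x := by
          rw [show (k : ℝ) - 1 = ((k - 1 : ℕ) : ℝ) by rw [Nat.cast_sub (by omega)]; simp,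
            one_div, Real.rpow_inv_natCast_pow hq (by omega)]
          field_simp
  unfold expectedPayoff
  rw [integral_eq_lintegral_of_nonneg_ae (ae_of_all _ fun A => blottoPayoff_nonneg hv A i₀)
    (measurable_blottoPayoff v i₀).aestronglyMeasurable]
  refine ENNReal.toReal_le_of_le_ofReal (by positivity) ?_
  have hmeas (j : Fin n) : Measurable fun b : Fin n → ℝ => μ {A | A j ≤ b j} := by
    have : Monotone fun x : ℝ => μ {A | A j ≤ x} := fun x y hxy =>
      measure_mono fun A (hA : A j ≤ x) => hA.trans hxy
    exact this.measurable.comp (measurable_pi_apply j)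
  calc ∫⁻ A, ENNReal.ofReal (blottoPayoff v A i₀) ∂Measure.pi (devFamily i₀ μ ν)
      ≤ ∫⁻ A, ∑ j, {A : Fin k → Fin n → ℝ | ∀ i', A i' j ≤ A i₀ j}.indicator
          (fun _ => ENNReal.ofReal (v j)) A ∂Measure.pi (devFamily i₀ μ ν) := by
        refine lintegral_mono fun A => ?_
        refine (ENNReal.ofReal_le_ofReal (blottoPayoff_le hv A i₀)).trans_eq ?_
        rw [ENNReal.ofReal_sum_of_nonneg fun j _ => by split_ifs; exacts [(hv j).le, le_rfl]]
        refine Finset.sum_congr rfl fun j _ => ?_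
        simp only [Set.indicator_apply, Set.mem_ofPred_eq]
        split_ifs <;> simp
    _ = ∫⁻ b, ∑ j, ENNReal.ofReal (v j) * μ {A | A j ≤ b j} ^ (k - 1) ∂ν := by
        rw [lintegral_finsetSum _ fun j _ =>
            measurable_const.indicator (measurableSet_forall_le i₀ j),
          lintegral_finsetSum _ fun j _ => ((hmeas j).pow_const _).const_mul _]
        refine Finset.sum_congr rfl fun j _ => ?_
        rw [lintegral_indicator_const (measurableSet_forall_le i₀ j), measure_pi_forall_le,
          lintegral_const_mul _ ((hmeas j).pow_const _)]
    _ ≤ ∫⁻ _, ENNReal.ofReal ((∑ l, v l) / k) ∂ν := by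
        refine lintegral_mono_ae ?_
        filter_upwards [hbudget] with b hb
        refine (Finset.sum_le_sum fun j _ => hpow (hb.1 j)).trans ?_
        rw [← ENNReal.ofReal_sum_of_nonneg fun j _ => mul_nonneg (by positivity) (hb.1 j),
          ← Finset.mul_sum]
        exact ENNReal.ofReal_le_ofReal (mul_le_of_le_one_right (by positivity) hb.2)
    _ = ENNReal.ofReal ((∑ l, v l) / k) := by simp

theorem expectedPayoff_symm_eq {k n : ℕ} (hk : 0 < k) {v : Fin n → ℝ} (hv : ∀ j, 0 < v j)
    (μ : Measure (Fin n → ℝ)) (hμ : IsProbabilityMeasure μ)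
    (hle : ∀ i : Fin k, expectedPayoff v (fun _ => μ) (fun _ => hμ) i ≤ (∑ l, v l) / k)
    (i₀ : Fin k) : expectedPayoff v (fun _ => μ) (fun _ => hμ) i₀ = (∑ l, v l) / k := by
  have hk0 : (k : ℝ) ≠ 0 := by exact_mod_cast hk.ne'
  have hsum : ∑ i : Fin k, expectedPayoff v (fun _ => μ) (fun _ => hμ) i =
      ∑ _i : Fin k, (∑ l, v l) / (k : ℝ) := by
    unfold expectedPayoff
    rw [← integral_finsetSum _ fun i _ => integrable_blottoPayoff hv _ i]
    simp_rw [sum_blottoPayoff hk]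
    simp [mul_div_cancel₀ _ hk0]
  exact (Finset.sum_eq_sum_iff_of_le fun i _ => hle i).1 hsum i₀ (Finset.mem_univ i₀)

theorem exists_blotto_measure {k n : ℕ} (hk : 2 ≤ k) (hn : 1 ≤ n) {v : Fin n → ℝ}
    (hv : ∀ j, 0 < v j) (part : Fin n → Fin k)
    (hpart : ∀ m : Fin k,
      ∑ j ∈ Finset.univ.filter (fun j => part j = m), v j = (∑ l, v l) / k) :
    ∃ μ : Measure (Fin n → ℝ), IsProbabilityMeasure μ ∧
      (∀ᵐ A ∂μ, (∀ j, 0 ≤ A j) ∧ ∑ j, A j = 1) ∧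
      ∀ j, ∀ x : ℝ, 0 ≤ x →
        μ {A : Fin n → ℝ | A j ≤ x} = ENNReal.ofReal (min 1
          (((∑ l, v l) * x / ((k : ℝ) * v j)) ^ ((1 : ℝ) / ((k : ℝ) - 1)))) := by
  obtain ⟨Q, hQ1, hQs, hQc⟩ := exists_simplex_measure hk
  have : Nonempty (Fin n) := ⟨⟨0, hn⟩⟩
  have hV : 0 < ∑ l, v l := Finset.sum_pos (fun j _ => hv j) Finset.univ_nonempty
  have hk0 : (0 : ℝ) < k := by exact_mod_cast (by omega : 0 < k)
  have hm : Measurable fun (X : Fin k → ℝ) (j : Fin n) => k * v j / (∑ l, v l) * X (part j) := by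
    fun_prop
  refine ⟨Q.map fun X j => k * v j / (∑ l, v l) * X (part j),
    Measure.isProbabilityMeasure_map hm.aemeasurable, ?_, fun j x hx => ?_⟩
  · rw [ae_map_iff hm.aemeasurable (by measurability)]
    filter_upwards [hQs] with X hX
    refine ⟨fun j => mul_nonneg (by have := hv j; positivity) (hX.1 _), ?_⟩
    rw [← hX.2, ← Finset.sum_fiberwise _ part]
    refine Finset.sum_congr rfl fun m _ => ?_
    calc ∑ j ∈ Finset.univ.filter (fun j => part j = m), k * v j / (∑ l, v l) * X (part j)
        = ∑ j ∈ Finset.univ.filter (fun j => part j = m), k / (∑ l, v l) * X m * v j :=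
          Finset.sum_congr rfl fun j hj => by rw [(Finset.mem_filter.1 hj).2]; ring
      _ = X m := by
          rw [← Finset.mul_sum, hpart]
          field_simp
  · rw [Measure.map_apply hm (measurableSet_le (by fun_prop) (by fun_prop)),
      ← hQc (part j) _ (by have := hv j; positivity)]
    congr 1
    ext X
    have hvj := hv j
    simp only [Set.mem_preimage, Set.mem_ofPred_eq]
    rw [le_div_iff₀ (by positivity), div_mul_eq_mul_div, div_le_iff₀ hV]
    constructor <;> intro h <;> linarith

end

theorem stmt2 (k n : ℕ) (hk : 2 ≤ k) (hn : 1 ≤ n) (v : Fin n → ℝ) (hv : ∀ j, 0 < v j)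
    (part : Fin n → Fin k)
    (hpart : ∀ m : Fin k,
      ∑ j ∈ Finset.univ.filter (fun j => part j = m), v j = (∑ l, v l) / k) :
    ∃ (μ : Measure (Fin n → ℝ)) (hμ : IsProbabilityMeasure μ),
      (∀ᵐ A ∂μ, (∀ j, 0 ≤ A j) ∧ ∑ j, A j = 1) ∧
      (∀ j, ∀ x : ℝ, 0 ≤ x →
        μ {A : Fin n → ℝ | A j ≤ x} =
          ENNReal.ofReal (min 1
            (((∑ l, v l) * x / ((k : ℝ) * v j)) ^ ((1 : ℝ) / ((k : ℝ) - 1))))) ∧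
      (∀ i₀ : Fin k,
        (∀ (ν : Measure (Fin n → ℝ)) (hν : IsProbabilityMeasure ν),
          (∀ᵐ A ∂ν, (∀ j, 0 ≤ A j) ∧ ∑ j, A j ≤ 1) →
          expectedPayoff v (devFamily i₀ μ ν) (devFamily_prob i₀ μ ν hμ hν) i₀ ≤
            (∑ l, v l) / k) ∧
        expectedPayoff v (fun _ => μ) (fun _ => hμ) i₀ = (∑ l, v l) / k) := by
  obtain ⟨μ, hμ, hsupp, hcdf⟩ := exists_blotto_measure hk hn hv part hpart
  have hdev := fun i₀ ν hν hbudget =>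
    expectedPayoff_dev_le hk hv μ ν hμ hν hcdf hbudget i₀
  refine ⟨μ, hμ, hsupp, hcdf, fun i₀ => ⟨hdev i₀,
    expectedPayoff_symm_eq (by omega) hv μ hμ (fun i => ?_) i₀⟩⟩
  have hself : devFamily i μ μ = fun _ => μ := funext fun _ => ite_self μ
  simpa only [hself] using hdev i μ hμ (hsupp.mono fun A hA => ⟨hA.1, hA.2.le⟩)
end

section
/- Fix an integer n ≥ 3 and battlefield values v_1,…,v_n > 0 with V = Σ_{j=1}^n v_j, and suppose v_j ≤ V/3 for every j ∈ [n]. Then there exists a probability measure μ on ℝ^n such that μ-almost surely every coordinate A_j is nonnegative and Σ_{j=1}^n A_j = 1, and for every j ∈ [n] and x ≥ 0, μ{A : A_j ≤ x} = min(1, √(V·x/(3·v_j))). -/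
open MeasureTheory

section Frame

variable {ι E : Type*} [Fintype ι] [NormedAddCommGroup E] [InnerProductSpace ℝ E]

/-- A finite Parseval frame: the squared frame coefficients of `x` sum to `‖x‖ ^ 2`. -/
def IsParsevalFrame (m : ι → E) : Prop :=
  ∀ x, ∑ j, inner ℝ (m j) x ^ 2 = ‖x‖ ^ 2

/-- Along the rotations of a pair of vectors, the squared norm of the first vector takes every
value between the two initial squared norms. -/
lemma exists_rotation_norm_sq_eq (p q : E) {t : ℝ}
    (ht : t ∈ Set.uIcc (‖q‖ ^ 2) (‖p‖ ^ 2)) :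
    ∃ θ : ℝ, ‖Real.cos θ • p + Real.sin θ • q‖ ^ 2 = t := by
  have hc : ContinuousOn (fun θ : ℝ => ‖Real.cos θ • p + Real.sin θ • q‖ ^ 2)
      (Set.uIcc (Real.pi / 2) 0) := by fun_prop
  have h := intermediate_value_uIcc hc
  simp only [Real.cos_pi_div_two, Real.sin_pi_div_two, Real.cos_zero, Real.sin_zero, zero_smul,
    one_smul, zero_add, add_zero] at h
  obtain ⟨θ, -, hθ⟩ := h ht
  exact ⟨θ, hθ⟩

lemma norm_sq_rotation_add (p q : E) (θ : ℝ) :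
    ‖Real.cos θ • p + Real.sin θ • q‖ ^ 2 + ‖Real.cos θ • q - Real.sin θ • p‖ ^ 2
      = ‖p‖ ^ 2 + ‖q‖ ^ 2 := by
  rw [norm_add_sq_real, norm_sub_sq_real]
  simp only [norm_smul, mul_pow, real_inner_smul_left, real_inner_smul_right, Real.norm_eq_abs,
    sq_abs, real_inner_comm q p]
  linear_combination (‖p‖ ^ 2 + ‖q‖ ^ 2) * Real.sin_sq_add_cos_sq θ

lemma inner_sq_rotation_add (p q x : E) (θ : ℝ) :
    inner ℝ (Real.cos θ • p + Real.sin θ • q) x ^ 2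
      + inner ℝ (Real.cos θ • q - Real.sin θ • p) x ^ 2
      = inner ℝ p x ^ 2 + inner ℝ q x ^ 2 := by
  simp only [inner_add_left, inner_sub_left, real_inner_smul_left]
  linear_combination (inner ℝ p x ^ 2 + inner ℝ q x ^ 2) * Real.sin_sq_add_cos_sq θ

variable [DecidableEq ι]

lemma sum_update_update_eq {F : Type*} (m : ι → F) (g : F → ℝ) {i j : ι} (hij : j ≠ i)
    {p q : F} (h : g p + g q = g (m i) + g (m j)) :
    ∑ k, g (Function.update (Function.update m i p) j q k) = ∑ k, g (m k) := by
  have hi : i ∈ Finset.univ.erase j := by simp [hij.symm]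
  rw [← Finset.add_sum_erase _ _ (Finset.mem_univ j), ← Finset.add_sum_erase _ _ hi,
    ← Finset.add_sum_erase _ (fun k => g (m k)) (Finset.mem_univ j),
    ← Finset.add_sum_erase _ (fun k => g (m k)) hi]
  have hrest : ∑ k ∈ (Finset.univ.erase j).erase i,
      g (Function.update (Function.update m i p) j q k)
      = ∑ k ∈ (Finset.univ.erase j).erase i, g (m k) := by
    refine Finset.sum_congr rfl fun k hk => ?_
    simp only [Finset.mem_erase] at hk
    rw [Function.update_of_ne hk.2.1, Function.update_of_ne hk.1]
  rw [hrest, Function.update_self, Function.update_of_ne hij.symm, Function.update_self]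
  linarith

/-- A Parseval frame whose squared norms are already the prescribed ones outside `insert e S`, and
are `0` or `1` on `S`, can be rotated into one with the prescribed squared norms everywhere. -/
lemma IsParsevalFrame.exists_norm_sq_eq_of_finset (a : ι → ℝ) (ha0 : ∀ j, 0 ≤ a j)
    (ha1 : ∀ j, a j ≤ 1) (S : Finset ι) : ∀ (e : ι) (m : ι → E), e ∉ S → IsParsevalFrame m →
    ∑ j, ‖m j‖ ^ 2 = ∑ j, a j → (∀ j, j ≠ e → j ∉ S → ‖m j‖ ^ 2 = a j) →
    (∀ j ∈ S, ‖m j‖ ^ 2 = 0 ∨ ‖m j‖ ^ 2 = 1) →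
    ∃ m' : ι → E, IsParsevalFrame m' ∧ ∀ j, ‖m' j‖ ^ 2 = a j := by
  induction S using Finset.strongInduction with
  | H S ih =>
  intro e m he hm hsum hout hS
  have hsum' : ∑ j, (‖m j‖ ^ 2 - a j) = 0 := by rw [Finset.sum_sub_distrib, hsum, sub_self]
  rcases S.eq_empty_or_nonempty with rfl | hne
  · refine ⟨m, hm, fun j => ?_⟩
    by_cases hj : j = e
    · subst hj
      rw [Finset.sum_eq_single j (fun b _ hb => by rw [hout b hb (by simp), sub_self])
        (by simp)] at hsum'
      linarith
    · exact hout j hj (by simp)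
  obtain ⟨j, hjS, hj⟩ : ∃ j ∈ S, a e ∈ Set.uIcc (‖m j‖ ^ 2) (‖m e‖ ^ 2) := by
    rcases lt_trichotomy (‖m e‖ ^ 2) (a e) with h | h | h
    · obtain ⟨j, -, hj⟩ := Finset.exists_pos_of_sum_zero_of_exists_nonzero _ hsum'
        ⟨e, Finset.mem_univ _, by linarith⟩
      have hje : j ≠ e := by rintro rfl; linarith
      have hjS : j ∈ S := by
        by_contra hjS
        linarith [hout j hje hjS]
      refine ⟨j, hjS, Set.mem_uIcc.2 (Or.inr ⟨h.le, ?_⟩)⟩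
      rcases hS j hjS with h0 | h1
      · linarith [ha0 j]
      · linarith [ha1 e]
    · obtain ⟨j, hj⟩ := hne
      exact ⟨j, hj, h ▸ Set.right_mem_uIcc⟩
    · obtain ⟨j, -, hj⟩ := Finset.exists_pos_of_sum_zero_of_exists_nonzero
        (s := Finset.univ) (fun j => -(‖m j‖ ^ 2 - a j))
        (by rw [Finset.sum_neg_distrib, hsum', neg_zero])
        ⟨e, Finset.mem_univ _, by simp only [ne_eq]; linarith⟩
      have hje : j ≠ e := by rintro rfl; linarith
      have hjS : j ∈ S := by
        by_contra hjS
        linarith [hout j hje hjS]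
      refine ⟨j, hjS, Set.mem_uIcc.2 (Or.inl ⟨?_, h.le⟩)⟩
      rcases hS j hjS with h0 | h1
      · linarith [ha0 e]
      · linarith [ha1 j]
  have hje : j ≠ e := fun h => he (h ▸ hjS)
  obtain ⟨θ, hθ⟩ := exists_rotation_norm_sq_eq (m e) (m j) hj
  refine ih (S.erase j) (Finset.erase_ssubset hjS) j
    (Function.update (Function.update m e (Real.cos θ • m e + Real.sin θ • m j)) j
      (Real.cos θ • m j - Real.sin θ • m e)) (Finset.notMem_erase j S) ?_ ?_ ?_ ?_
  · intro x
    rw [← hm x]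
    exact sum_update_update_eq m (fun y => inner ℝ y x ^ 2) hje (inner_sq_rotation_add _ _ x θ)
  · rw [← hsum]
    exact sum_update_update_eq m (fun y => ‖y‖ ^ 2) hje (norm_sq_rotation_add _ _ θ)
  · intro k hkj hkS
    rw [Function.update_of_ne hkj]
    by_cases hke : k = e
    · subst hke
      rw [Function.update_self, hθ]
    · rw [Function.update_of_ne hke]
      exact hout k hke fun hk => hkS (Finset.mem_erase.2 ⟨hkj, hk⟩)
  · intro k hk
    have hke : k ≠ e := fun h => he (h ▸ Finset.mem_of_mem_erase hk)
    rw [Function.update_of_ne (Finset.ne_of_mem_erase hk), Function.update_of_ne hke]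
    exact hS k (Finset.mem_of_mem_erase hk)

end Frame

/-- Existence of a Parseval frame of `ℝ ^ d` with prescribed squared norms. -/
lemma exists_isParsevalFrame_norm_sq_eq {d n : ℕ} (hd : 0 < d) (hn : d ≤ n) (a : Fin n → ℝ)
    (ha0 : ∀ j, 0 ≤ a j) (ha1 : ∀ j, a j ≤ 1) (hsum : ∑ j, a j = d) :
    ∃ m : Fin n → EuclideanSpace ℝ (Fin d), IsParsevalFrame m ∧ ∀ j, ‖m j‖ ^ 2 = a j := by
  obtain ⟨k, rfl⟩ := Nat.exists_eq_add_of_le hn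
  refine IsParsevalFrame.exists_norm_sq_eq_of_finset a ha0 ha1
    (Finset.univ.erase ⟨0, by lia⟩) ⟨0, by lia⟩
    (Fin.addCases (fun i => EuclideanSpace.single i 1) fun _ => 0) (by simp) ?_ ?_ ?_ ?_
  · intro x
    simp [Fin.sum_univ_add, EuclideanSpace.norm_sq_eq, EuclideanSpace.inner_single_left]
  · simp [Fin.sum_univ_add, hsum]
  · simp +contextual
  · intro j _
    induction j using Fin.addCases <;> simp

lemma exists_linearIsometryEquiv_apply_eq {E F : Type*} [NormedAddCommGroup E]
    [InnerProductSpace ℝ E] [FiniteDimensional ℝ E] [NormedAddCommGroup F] [InnerProductSpace ℝ F]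
    [FiniteDimensional ℝ F] (h : Module.finrank ℝ E = Module.finrank ℝ F) {e : E} {f : F}
    (he : ‖e‖ = 1) (hf : ‖f‖ = 1) : ∃ φ : E ≃ₗᵢ[ℝ] F, φ e = f := by
  have : Nontrivial E := ⟨e, 0, by rintro rfl; simp at he⟩
  have hpos : 0 < Module.finrank ℝ E := Module.finrank_pos
  let i : Fin (Module.finrank ℝ E) := ⟨0, hpos⟩
  obtain ⟨b, hb⟩ := Orthonormal.exists_orthonormalBasis_extension_of_card_eq (𝕜 := ℝ) (E := E)
    (ι := Fin (Module.finrank ℝ E)) (by simp) (v := fun _ => e) (s := {i})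
    ⟨fun _ => he, fun x y hxy => (hxy (Subsingleton.elim x y)).elim⟩
  obtain ⟨c, hc⟩ := Orthonormal.exists_orthonormalBasis_extension_of_card_eq (𝕜 := ℝ) (E := F)
    (ι := Fin (Module.finrank ℝ E)) (by simp [h]) (v := fun _ => f) (s := {i})
    ⟨fun _ => hf, fun x y hxy => (hxy (Subsingleton.elim x y)).elim⟩
  refine ⟨b.equiv c (Equiv.refl _), ?_⟩
  rw [← hb i rfl, OrthonormalBasis.equiv_apply_basis, Equiv.refl_apply, hc i rfl]

lemma Complex.volume_norm_sq_lt (r : ℝ) :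
    volume {w : ℂ | ‖w‖ ^ 2 < r} = ENNReal.ofReal (r * Real.pi) := by
  rcases le_total r 0 with hr | hr
  · have : {w : ℂ | ‖w‖ ^ 2 < r} = ∅ := by
      ext w
      simpa using hr.trans (sq_nonneg ‖w‖)
    rw [this, measure_empty, ENNReal.ofReal_of_nonpos
      (mul_nonpos_of_nonpos_of_nonneg hr Real.pi_pos.le)]
  · have : {w : ℂ | ‖w‖ ^ 2 < r} = Metric.ball 0 (√r) := by
      ext w
      simp [Real.lt_sqrt (norm_nonneg w)]
    rw [this, Complex.volume_ball, ← ENNReal.ofReal_pow (Real.sqrt_nonneg r), Real.sq_sqrt hr,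
      ENNReal.ofReal_mul hr, ← NNReal.coe_real_pi, ENNReal.ofReal_coe_nnreal]

/-- Archimedes' theorem, in product coordinates: the part of the unit ball of `ℝ × ℂ` inside the
double cone complement `|z| ≤ s * ‖(z, w)‖` has the volume of the ball scaled by `s` along `ℝ`. -/
lemma volume_ball_inter_cone_prod {s : ℝ} (hs0 : 0 < s) (hs1 : s ≤ 1) :
    volume {p : ℝ × ℂ | p.1 ^ 2 + ‖p.2‖ ^ 2 < 1 ∧ p.1 ^ 2 ≤ s ^ 2 * (p.1 ^ 2 + ‖p.2‖ ^ 2)} =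
      ENNReal.ofReal s * volume {p : ℝ × ℂ | p.1 ^ 2 + ‖p.2‖ ^ 2 < 1} := by
  have hC : MeasurableSet {p : ℝ × ℂ | p.1 ^ 2 + ‖p.2‖ ^ 2 < 1 ∧
      p.1 ^ 2 ≤ s ^ 2 * (p.1 ^ 2 + ‖p.2‖ ^ 2)} := by measurability
  have hB : MeasurableSet {p : ℝ × ℂ | p.1 ^ 2 + ‖p.2‖ ^ 2 < 1} := by measurability
  have hBz (z : ℝ) : volume (Prod.mk z ⁻¹' {p : ℝ × ℂ | p.1 ^ 2 + ‖p.2‖ ^ 2 < 1}) =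
      ENNReal.ofReal ((1 - z ^ 2) * Real.pi) := by
    rw [← Complex.volume_norm_sq_lt]
    congr 1
    ext w
    simp [lt_sub_iff_add_lt']
  have hCz (z : ℝ) : volume (Prod.mk z ⁻¹' {p : ℝ × ℂ | p.1 ^ 2 + ‖p.2‖ ^ 2 < 1 ∧
      p.1 ^ 2 ≤ s ^ 2 * (p.1 ^ 2 + ‖p.2‖ ^ 2)}) =
      ENNReal.ofReal ((1 - (s⁻¹ * z) ^ 2) * Real.pi) := by
    have hset : Prod.mk z ⁻¹' {p : ℝ × ℂ | p.1 ^ 2 + ‖p.2‖ ^ 2 < 1 ∧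
        p.1 ^ 2 ≤ s ^ 2 * (p.1 ^ 2 + ‖p.2‖ ^ 2)} =
        {w : ℂ | ‖w‖ ^ 2 < 1 - z ^ 2} \ {w : ℂ | ‖w‖ ^ 2 < (s⁻¹ * z) ^ 2 - z ^ 2} := by
      ext w
      have : z ^ 2 ≤ s ^ 2 * (z ^ 2 + ‖w‖ ^ 2) ↔ (s⁻¹ * z) ^ 2 ≤ z ^ 2 + ‖w‖ ^ 2 := by
        rw [mul_pow, inv_pow, inv_mul_le_iff₀ (by positivity)]
      simp [this, lt_sub_iff_add_lt']
    have hnonneg : 0 ≤ (s⁻¹ * z) ^ 2 - z ^ 2 := by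
      rw [mul_pow, sub_nonneg]
      exact le_mul_of_one_le_left (sq_nonneg z) (one_le_pow₀ ((one_le_inv₀ hs0).2 hs1))
    have hsub {r r' : ℝ} (h : r ≤ r') : {w : ℂ | ‖w‖ ^ 2 < r} ⊆ {w : ℂ | ‖w‖ ^ 2 < r'} :=
      fun w hw => lt_of_lt_of_le hw h
    rw [hset]
    rcases le_total ((s⁻¹ * z) ^ 2) 1 with h | h
    · rw [measure_sdiff (hsub (by linarith))
        (measurableSet_lt (by fun_prop) (by fun_prop)).nullMeasurableSet
        (by rw [Complex.volume_norm_sq_lt]; exact ENNReal.ofReal_ne_top),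
        Complex.volume_norm_sq_lt, Complex.volume_norm_sq_lt,
        ← ENNReal.ofReal_sub _ (mul_nonneg hnonneg Real.pi_pos.le)]
      congr 1
      ring
    · rw [Set.sdiff_eq_empty.2 (hsub (by linarith)), measure_empty,
        ENNReal.ofReal_of_nonpos (mul_nonpos_of_nonpos_of_nonneg (by linarith) Real.pi_pos.le)]
  rw [Measure.volume_eq_prod, Measure.prod_apply hC, Measure.prod_apply hB]
  simp only [hBz, hCz]
  rw [← lintegral_map (f := fun z : ℝ => ENNReal.ofReal ((1 - z ^ 2) * Real.pi)) (by fun_prop)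
    (measurable_const_mul s⁻¹), Real.map_volume_mul_left (inv_ne_zero hs0.ne'),
    lintegral_smul_measure, inv_inv, abs_of_pos hs0, smul_eq_mul]

/-- **Archimedes' hat-box theorem**, as a statement about solid cones. -/
lemma volume_ball_inter_cone {E : Type*} [NormedAddCommGroup E] [InnerProductSpace ℝ E]
    [FiniteDimensional ℝ E] [MeasurableSpace E] [BorelSpace E] (hE : Module.finrank ℝ E = 3)
    {e : E} (he : ‖e‖ = 1) {s : ℝ} (hs0 : 0 < s) (hs1 : s ≤ 1) :
    volume (Metric.ball (0 : E) 1 ∩ {x | inner ℝ e x ^ 2 ≤ s ^ 2 * ‖x‖ ^ 2}) =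
      ENNReal.ofReal s * volume (Metric.ball (0 : E) 1) := by
  have hF : Module.finrank ℝ (WithLp 2 (ℝ × ℂ)) = 3 := by
    rw [(WithLp.linearEquiv 2 ℝ (ℝ × ℂ)).finrank_eq]
    simp
  have hu : ‖WithLp.toLp 2 ((1 : ℝ), (0 : ℂ))‖ = 1 := by
    simp
  obtain ⟨φ, hφ⟩ := exists_linearIsometryEquiv_apply_eq (hE.trans hF.symm) he hu
  have hmp : MeasurePreserving (fun x => WithLp.ofLp (φ x)) (volume : Measure E)
      (volume : Measure (ℝ × ℂ)) :=
    (WithLp.volume_preserving_ofLp ℝ ℂ).comp φ.measurePreserving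
  have hnorm (x : E) : ‖x‖ ^ 2 = (φ x).fst ^ 2 + ‖(φ x).snd‖ ^ 2 := by
    rw [← φ.norm_map, WithLp.prod_norm_sq_eq_of_L2, Real.norm_eq_abs, sq_abs]
  have hinner (x : E) : inner ℝ e x = (φ x).fst := by
    rw [← φ.inner_map_map, hφ, WithLp.prod_inner_apply]
    simp
  have hball : Metric.ball (0 : E) 1 =
      (fun x => WithLp.ofLp (φ x)) ⁻¹' {p : ℝ × ℂ | p.1 ^ 2 + ‖p.2‖ ^ 2 < 1} := by
    ext x
    rw [mem_ball_zero_iff, ← sq_lt_one_iff₀ (norm_nonneg x), hnorm]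
    rfl
  have hcone : Metric.ball (0 : E) 1 ∩ {x | inner ℝ e x ^ 2 ≤ s ^ 2 * ‖x‖ ^ 2} =
      (fun x => WithLp.ofLp (φ x)) ⁻¹' {p : ℝ × ℂ | p.1 ^ 2 + ‖p.2‖ ^ 2 < 1 ∧
        p.1 ^ 2 ≤ s ^ 2 * (p.1 ^ 2 + ‖p.2‖ ^ 2)} := by
    rw [hball]
    ext x
    simp only [Set.mem_inter_iff, Set.mem_ofPred_eq, hnorm, hinner]
    rfl
  rw [hcone, hball, hmp.measure_preimage (by measurability),
    hmp.measure_preimage (by measurability), volume_ball_inter_cone_prod hs0 hs1]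

section Cone

open ProbabilityTheory

variable {E : Type*} [NormedAddCommGroup E] [InnerProductSpace ℝ E] [FiniteDimensional ℝ E]
  [MeasurableSpace E] [BorelSpace E]

lemma isProbabilityMeasure_cond_unitBall :
    IsProbabilityMeasure (cond (volume : Measure E) (Metric.ball 0 1)) :=
  cond_isProbabilityMeasure_of_finite (Metric.measure_ball_pos _ _ one_pos).ne'
    measure_ball_lt_top.ne

/-- The squared cosine of the angle between `e` and a uniform point of the unit ball of a
three-dimensional space is distributed as the square of a uniform variable on `[0, 1]`. -/
lemma cond_unitBall_cone (hE : Module.finrank ℝ E = 3) {e : E} (he : ‖e‖ = 1) {s : ℝ}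
    (hs : 0 ≤ s) :
    cond volume (Metric.ball (0 : E) 1) {y | inner ℝ e y ^ 2 ≤ s ^ 2 * ‖y‖ ^ 2} =
      ENNReal.ofReal (min 1 s) := by
  have := isProbabilityMeasure_cond_unitBall (E := E)
  have hpos {s : ℝ} (hs0 : 0 < s) (hs1 : s ≤ 1) :
      cond volume (Metric.ball (0 : E) 1) {y | inner ℝ e y ^ 2 ≤ s ^ 2 * ‖y‖ ^ 2} =
        ENNReal.ofReal s := by
    rw [cond_apply Metric.isOpen_ball.measurableSet, volume_ball_inter_cone hE he hs0 hs1, mul_comm,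
      mul_assoc, ENNReal.mul_inv_cancel (Metric.measure_ball_pos _ _ one_pos).ne'
        measure_ball_lt_top.ne, mul_one]
  rcases hs.eq_or_lt with rfl | hs0
  · rw [min_eq_right zero_le_one, ENNReal.ofReal_zero, ← nonpos_iff_eq_zero]
    refine ENNReal.le_of_forall_pos_le_add fun ε hε _ => ?_
    rw [zero_add]
    have hδ : 0 < min (ε : ℝ) 1 := lt_min (by exact_mod_cast hε) one_pos
    refine (measure_mono fun y hy => ?_).trans
      ((hpos hδ (min_le_right _ _)).le.trans ?_)
    · have hy' : inner ℝ e y ^ 2 ≤ 0 ^ 2 * ‖y‖ ^ 2 := hy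
      show inner ℝ e y ^ 2 ≤ min (ε : ℝ) 1 ^ 2 * ‖y‖ ^ 2
      exact hy'.trans (by rw [zero_pow two_ne_zero, zero_mul]; positivity)
    · rw [← ENNReal.ofReal_coe_nnreal]
      exact ENNReal.ofReal_le_ofReal (min_le_left _ _)
  rcases le_total s 1 with hs1 | hs1
  · rw [min_eq_right hs1, hpos hs0 hs1]
  · have huniv : {y | inner ℝ e y ^ 2 ≤ s ^ 2 * ‖y‖ ^ 2} = Set.univ := by
      refine Set.eq_univ_of_forall fun y => ?_
      have h := real_inner_mul_inner_self_le e y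
      rw [real_inner_self_eq_norm_sq, real_inner_self_eq_norm_sq, he] at h
      show inner ℝ e y ^ 2 ≤ s ^ 2 * ‖y‖ ^ 2
      nlinarith [mul_le_mul_of_nonneg_right (one_le_pow₀ hs1 : 1 ≤ s ^ 2) (sq_nonneg ‖y‖)]
    rw [min_eq_left hs1, huniv, measure_univ, ENNReal.ofReal_one]

lemma cond_unitBall_inner_sq_div_norm_sq_le (hE : Module.finrank ℝ E = 3) {w : E} (hw : w ≠ 0)
    {x : ℝ} (hx : 0 ≤ x) :
    cond volume (Metric.ball (0 : E) 1) {y | inner ℝ w y ^ 2 / ‖y‖ ^ 2 ≤ x} =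
      ENNReal.ofReal (min 1 √(x / ‖w‖ ^ 2)) := by
  have hw' : 0 < ‖w‖ := norm_pos_iff.2 hw
  rw [← cond_unitBall_cone hE (norm_smul_inv_norm (𝕜 := ℝ) hw) (Real.sqrt_nonneg _)]
  congr 1
  ext y
  simp only [Set.mem_ofPred_eq]
  rcases eq_or_ne y 0 with rfl | hy
  · simpa using hx
  · have hy' : 0 < ‖y‖ := norm_pos_iff.2 hy
    rw [Real.sq_sqrt (by positivity), div_le_iff₀ (by positivity), real_inner_smul_left, mul_pow,
      div_mul_eq_mul_div, le_div_iff₀ (by positivity)]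
    simp [field]

end Cone

theorem stmt4 (n : ℕ) (hn : 3 ≤ n) (v : Fin n → ℝ) (hv : ∀ j, 0 < v j)
    (hbound : ∀ j, v j ≤ (∑ l, v l) / 3) :
    ∃ μ : Measure (Fin n → ℝ), IsProbabilityMeasure μ ∧
      (∀ᵐ A ∂μ, (∀ j, 0 ≤ A j) ∧ ∑ j, A j = 1) ∧
      (∀ j, ∀ x : ℝ, 0 ≤ x →
        μ {A : Fin n → ℝ | A j ≤ x} =
          ENNReal.ofReal (min 1 (Real.sqrt ((∑ l, v l) * x / (3 * v j))))) := by
  have hV : 0 < ∑ l, v l :=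
    Finset.sum_pos (fun j _ => hv j) ⟨⟨0, by lia⟩, Finset.mem_univ _⟩
  obtain ⟨m, hm, hnorm⟩ := exists_isParsevalFrame_norm_sq_eq (by norm_num : 0 < 3) hn
    (fun j => 3 * v j / ∑ l, v l) (fun j => by have := hv j; positivity)
    (fun j => by rw [div_le_one hV]; linarith [hbound j])
    (by rw [← Finset.sum_div, ← Finset.mul_sum, mul_div_cancel_right₀ _ hV.ne']; norm_num)
  let F : EuclideanSpace ℝ (Fin 3) → Fin n → ℝ := fun y j => inner ℝ (m j) y ^ 2 / ‖y‖ ^ 2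
  have hF : Measurable F := by fun_prop
  have := isProbabilityMeasure_cond_unitBall (E := EuclideanSpace ℝ (Fin 3))
  refine ⟨(ProbabilityTheory.cond volume (Metric.ball 0 1)).map F,
    Measure.isProbabilityMeasure_map hF.aemeasurable, ?_, fun j x hx => ?_⟩
  · rw [ae_map_iff hF.aemeasurable (by measurability)]
    have hne : ∀ᵐ y : EuclideanSpace ℝ (Fin 3), y ≠ 0 := by simp [ae_iff]
    filter_upwards [ProbabilityTheory.cond_absolutelyContinuous.ae_le hne] with y hy
    refine ⟨fun j => by positivity, ?_⟩
    rw [← Finset.sum_div, hm y, div_self (pow_ne_zero 2 (norm_ne_zero_iff.2 hy))]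
  · have hmj : m j ≠ 0 := by
      intro h
      have h' := hnorm j
      rw [h, norm_zero] at h'
      have := div_pos (mul_pos three_pos (hv j)) hV
      linarith
    rw [Measure.map_apply hF (measurableSet_le (measurable_pi_apply j) measurable_const)]
    refine (cond_unitBall_inner_sq_div_norm_sq_le (by simp) hmj hx).trans ?_
    rw [hnorm j, div_div_eq_mul_div, mul_comm x]
end

section
/- Let k ≥ 3 be an integer, let v_1 ≥ v_2 ≥ … ≥ v_n > 0, and let B be an integer with 0 ≤ B ≤ n, and set p*_j = m_{v_j}^{-1}(x*) for j ∈ [n]. Let μ be a probability measure on {0,1}^n such that μ-almost surely Σ_{j=1}^n A_j ≤ B and, for each j ∈ [n], μ{A : A_j = 1} = p*_j. Then independent play of μ by all k players is a Nash equilibrium of the Boolean-valued Colonel Blotto game: for every probability measure ν on {0,1}^n that almost surely satisfies Σ_{j=1}^n A_j ≤ B, the expected Boolean Blotto payoff of a single player drawing her bid vector from ν while the other k−1 players draw independently from μ is at most the expected payoff she receives by drawing from μ. -/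
open MeasureTheory

/-- Marginal utility `m_v(p)` of competing in a battlefield of value `v` in the
`k`-player Boolean General Lotto game, when each of the other `k−1` players
independently competes with probability `p`. -/
noncomputable def mMarg (k : ℕ) (v p : ℝ) : ℝ :=
  if p = 0 then ((k : ℝ) - 1) * v / k else (v / k) * ((1 - (1 - p) ^ (k - 1)) / p)

/-- Boolean Colonel Blotto payoff: each battlefield's value is split evenly
among the players who bid the most (`false < true`) on it. -/
noncomputable def boolBlottoPayoff {k n : ℕ} (v : Fin n → ℝ) (A : Fin k → Fin n → Bool)
    (i : Fin k) : ℝ :=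
  ∑ j, if ∀ i', A i' j ≤ A i j then
      v j / ((Finset.univ.filter fun i' : Fin k => ∀ i'', A i'' j ≤ A i' j).card : ℝ)
    else 0

/-- Expected payoff of player `i` when each player `i'` independently samples its
Boolean bid vector from `P i'`. -/
noncomputable def boolExpectedPayoff {k n : ℕ} (v : Fin n → ℝ)
    (P : Fin k → Measure (Fin n → Bool)) (hP : ∀ i, IsProbabilityMeasure (P i))
    (i : Fin k) : ℝ :=
  haveI := hP
  ∫ A, boolBlottoPayoff v A i ∂(Measure.pi P)

/-- The payoff of player `i` on a single battlefield of value `v` with bids `c`. -/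
noncomputable def battlefieldPayoff {k : ℕ} (v : ℝ) (c : Fin k → Bool) (i : Fin k) : ℝ :=
  if ∀ i', c i' ≤ c i then
    v / ((Finset.univ.filter fun i' : Fin k => ∀ i'', c i'' ≤ c i').card : ℝ)
  else 0

/-- The mass function of a Bernoulli bid. -/
def bidWeight (p : ℝ) (b : Bool) : ℝ := if b then p else 1 - p

theorem mMarg_eq_sum {k : ℕ} (hk : 1 ≤ k) (v p : ℝ) :
    mMarg k v p = v / k * ∑ i ∈ Finset.range (k - 1), (1 - p) ^ i := by
  unfold mMarg
  split_ifs with h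
  · subst h
    simp [Nat.cast_sub hk]
    ring
  · congr 1
    rw [div_eq_iff h]
    have := geom_sum_mul (1 - p) (k - 1)
    linarith

theorem mMarg_zero (k : ℕ) (v : ℝ) : mMarg k v 0 = ((k : ℝ) - 1) * v / k := by
  simp [mMarg]

theorem mMarg_one {k : ℕ} (hk : 2 ≤ k) (v : ℝ) : mMarg k v 1 = v / k := by
  have : k - 1 ≠ 0 := by omega
  simp [mMarg, this]

theorem mMarg_continuous {k : ℕ} (hk : 1 ≤ k) (v : ℝ) : Continuous (mMarg k v) := by
  rw [funext (mMarg_eq_sum hk v)]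
  fun_prop

theorem mMarg_antitoneOn {k : ℕ} (hk : 1 ≤ k) {v : ℝ} (hv : 0 < v) :
    AntitoneOn (mMarg k v) (Set.Icc 0 1) := by
  intro p hp q hq hpq
  rw [mMarg_eq_sum hk, mMarg_eq_sum hk]
  have : 0 ≤ 1 - q := by linarith [hq.2]
  gcongr

/-- `g` is the extended inverse of `mMarg k v`. -/
structure IsExtendedInverse (k : ℕ) (v : ℝ) (g : ℝ → ℝ) : Prop where
  apply_mMarg : ∀ p ∈ Set.Icc (0 : ℝ) 1, g (mMarg k v p) = p
  eq_one : ∀ x : ℝ, x < v / k → g x = 1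
  eq_zero : ∀ x : ℝ, ((k : ℝ) - 1) * v / k < x → g x = 0

namespace IsExtendedInverse

variable {k : ℕ} {v : ℝ} {g : ℝ → ℝ}

theorem cases (hg : IsExtendedInverse k v g) (hk : 2 ≤ k) (x : ℝ) :
    (x < mMarg k v 1 ∧ g x = 1) ∨ (mMarg k v 0 < x ∧ g x = 0) ∨
      (g x ∈ Set.Icc (0 : ℝ) 1 ∧ mMarg k v (g x) = x) := by
  rcases lt_or_ge x (mMarg k v 1) with h1 | h1
  · exact Or.inl ⟨h1, hg.eq_one x (by rwa [mMarg_one hk] at h1)⟩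
  rcases lt_or_ge (mMarg k v 0) x with h0 | h0
  · exact Or.inr (Or.inl ⟨h0, hg.eq_zero x (by rwa [mMarg_zero] at h0)⟩)
  obtain ⟨p, hp, rfl⟩ := intermediate_value_Icc' zero_le_one
    (mMarg_continuous (by omega : 1 ≤ k) v).continuousOn ⟨h1, h0⟩
  rw [hg.apply_mMarg p hp]
  exact Or.inr (Or.inr ⟨hp, rfl⟩)

theorem mem_Icc (hg : IsExtendedInverse k v g) (hk : 2 ≤ k) (x : ℝ) :
    g x ∈ Set.Icc (0 : ℝ) 1 := by
  rcases hg.cases hk x with ⟨-, h⟩ | ⟨-, h⟩ | ⟨h, -⟩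
  · simp [h]
  · simp [h]
  · exact h

theorem sub_mul_sub_nonpos (hg : IsExtendedInverse k v g) (hk : 2 ≤ k) (x : ℝ) {q : ℝ}
    (hq : q ∈ Set.Icc (0 : ℝ) 1) : (q - g x) * (mMarg k v (g x) - x) ≤ 0 := by
  rcases hg.cases hk x with ⟨h, h'⟩ | ⟨h, h'⟩ | ⟨-, h⟩
  · rw [h']
    nlinarith [hq.2]
  · rw [h']
    nlinarith [hq.1]
  · simp [h]

theorem antitone (hg : IsExtendedInverse k v g) (hk : 2 ≤ k) (hv : 0 < v) : Antitone g := by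
  intro x y hxy
  by_contra! hlt
  have hx := hg.mem_Icc hk x
  have hy := hg.mem_Icc hk y
  have h1 := hg.sub_mul_sub_nonpos hk x hy
  have h2 := hg.sub_mul_sub_nonpos hk y hx
  have h3 := mMarg_antitoneOn (by omega : 1 ≤ k) hv hx hy hlt.le
  have h4 : mMarg k v (g x) ≤ x := by nlinarith
  have h5 : y ≤ mMarg k v (g y) := by nlinarith
  obtain rfl : x = y := by linarith
  exact lt_irrefl _ hlt

theorem continuous (hg : IsExtendedInverse k v g) (hk : 2 ≤ k) (hv : 0 < v) :
    Continuous g := by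
  let f : ℝ → Set.Icc (0 : ℝ) 1 := fun x => ⟨g (-x), hg.mem_Icc hk _⟩
  have hf : Continuous f := by
    apply Monotone.continuous_of_surjective
    · intro x y hxy
      exact hg.antitone hk hv (neg_le_neg hxy)
    · intro p
      refine ⟨-mMarg k v p, Subtype.ext ?_⟩
      simp [f, hg.apply_mMarg p p.2]
  have : g = fun x => (f (-x) : ℝ) := by
    funext x
    simp [f]
  rw [this]
  fun_prop

end IsExtendedInverse

theorem sum_extendedInverse_sInf {k n : ℕ} (hk : 2 ≤ k) {B : ℕ} (hB : B ≤ n) {v : Fin n → ℝ}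
    (hv : ∀ j, 0 < v j) {g : Fin n → ℝ → ℝ} (hg : ∀ j, IsExtendedInverse k (v j) (g j)) :
    0 ≤ sInf {x : ℝ | ∑ j, g j x ≤ (B : ℝ)} ∧
      (B : ℝ) ≤ ∑ j, g j (sInf {x : ℝ | ∑ j, g j x ≤ (B : ℝ)}) := by
  have hk0 : (0 : ℝ) < k := by
    exact_mod_cast (by omega : 0 < k)
  have hnonpos : ∀ x ≤ (0 : ℝ), ∑ j, g j x = n := by
    intro x hx
    rw [Finset.sum_congr rfl fun j _ =>
      (hg j).eq_one x (lt_of_le_of_lt hx (div_pos (hv j) hk0))]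
    simp
  rcases hB.eq_or_lt with rfl | hlt
  · have : {x : ℝ | ∑ j, g j x ≤ (B : ℝ)} = Set.univ := by
      refine Set.eq_univ_of_forall fun x => ?_
      calc ∑ j, g j x ≤ ∑ _j : Fin B, (1 : ℝ) :=
            Finset.sum_le_sum fun j _ => ((hg j).mem_Icc hk x).2
        _ = B := by simp
    rw [this, Real.sInf_univ, hnonpos 0 le_rfl]
    exact ⟨le_rfl, le_rfl⟩
  · set S := {x : ℝ | ∑ j, g j x ≤ (B : ℝ)} with hS
    have hpos : ∀ x ∈ S, 0 ≤ x := by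
      intro x hx
      by_contra! h
      have hx' : (∑ j, g j x) ≤ (B : ℝ) := hx
      rw [hnonpos x h.le] at hx'
      exact absurd (Nat.cast_le.mp hx') (by omega)
    refine ⟨Real.sInf_nonneg hpos, ?_⟩
    have hcont : Continuous fun x => ∑ j, g j x :=
      continuous_finsetSum _ fun j _ => (hg j).continuous hk (hv j)
    refine ge_of_tendsto
      ((hcont.tendsto (sInf S)).mono_left
        (nhdsWithin_le_nhds (s := Set.Iio (sInf S)))) ?_
    filter_upwards [self_mem_nhdsWithin] with x hx
    by_contra! h
    exact absurd (csInf_le ⟨0, hpos⟩ (show x ∈ S from h.le)) (not_le.mpr hx)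

theorem sum_battlefieldPayoff {k : ℕ} (hk : 1 ≤ k) (v : ℝ) (c : Fin k → Bool) :
    ∑ i, battlefieldPayoff v c i = v := by
  unfold battlefieldPayoff
  rw [← Finset.sum_filter, Finset.sum_const, nsmul_eq_mul, mul_div_cancel₀]
  have : Nonempty (Fin k) := ⟨⟨0, hk⟩⟩
  obtain ⟨i, hi⟩ := Finite.exists_max c
  simp only [ne_eq, Nat.cast_eq_zero, Finset.card_eq_zero]
  exact Finset.ne_empty_of_mem (a := i) (by simpa using hi)

theorem sum_prod_bidWeight {k : ℕ} (q : Fin k → ℝ) :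
    ∑ c : Fin k → Bool, ∏ i, bidWeight (q i) (c i) = 1 := by
  rw [← Fintype.piFinset_univ, ← Finset.prod_univ_sum]
  simp [bidWeight]

/-- The expected payoff of player `i₀` on a battlefield of value `v` if player `i` competes
with probability `q i`. -/
noncomputable def battlefieldValue {k : ℕ} (v : ℝ) (q : Fin k → ℝ) (i₀ : Fin k) : ℝ :=
  ∑ c : Fin k → Bool, (∏ i, bidWeight (q i) (c i)) * battlefieldPayoff v c i₀

theorem battlefieldPayoff_comp_perm {k : ℕ} (v : ℝ) (c : Fin k → Bool) (σ : Equiv.Perm (Fin k))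
    (i : Fin k) : battlefieldPayoff v (c ∘ σ) i = battlefieldPayoff v c (σ i) := by
  unfold battlefieldPayoff
  have h : ∀ b : Bool, (∀ i', (c ∘ σ) i' ≤ b) ↔ ∀ i', c i' ≤ b := fun b =>
    σ.forall_congr fun {a} => by simp
  simp only [h]
  have hcard : (Finset.univ.filter fun i' : Fin k => ∀ i'', c i'' ≤ (c ∘ σ) i').card =
      (Finset.univ.filter fun i' : Fin k => ∀ i'', c i'' ≤ c i').card :=
    Finset.card_equiv σ (by simp)
  rw [hcard]
  rfl

theorem battlefieldValue_const {k : ℕ} (v p : ℝ) (i₀ : Fin k) :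
    battlefieldValue v (fun _ => p) i₀ = v / k := by
  have hk : 1 ≤ k := by have := i₀.2; omega
  have hsymm : ∀ i : Fin k, battlefieldValue v (fun _ => p) i = battlefieldValue v (fun _ => p) i₀ := by
    intro i
    refine Fintype.sum_equiv ((Equiv.swap i₀ i).arrowCongr (Equiv.refl Bool)) _ _ fun c => ?_
    have : (Equiv.swap i₀ i).arrowCongr (Equiv.refl Bool) c = c ∘ Equiv.swap i₀ i := by
      ext
      simp [Equiv.arrowCongr]
    rw [this, battlefieldPayoff_comp_perm, Equiv.swap_apply_left]
    congr 1
    exact (Equiv.prod_comp (Equiv.swap i₀ i) fun i => bidWeight p (c i)).symm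
  have hsum : ∑ i, battlefieldValue v (fun _ : Fin k => p) i = v := by
    unfold battlefieldValue
    rw [Finset.sum_comm]
    simp_rw [← Finset.mul_sum, sum_battlefieldPayoff hk, ← Finset.sum_mul]
    rw [sum_prod_bidWeight fun _ => p, one_mul]
  simp_rw [hsymm] at hsum
  rw [Finset.sum_const, Finset.card_univ, Fintype.card_fin, nsmul_eq_mul] at hsum
  rw [eq_div_iff (by positivity)]
  linarith

theorem prod_bidWeight_deviation {k : ℕ} (p q : ℝ) (i₀ : Fin k) (c : Fin k → Bool) :
    ∏ i, bidWeight (if i = i₀ then q else p) (c i) =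
      bidWeight q (c i₀) * ∏ i ∈ Finset.univ.erase i₀, bidWeight p (c i) := by
  rw [← Finset.mul_prod_erase _ _ (Finset.mem_univ i₀), if_pos rfl]
  congr 1
  exact Finset.prod_congr rfl fun i hi => by rw [if_neg (Finset.ne_of_mem_erase hi)]

theorem battlefieldValue_affine {k : ℕ} (v p q : ℝ) (i₀ : Fin k) :
    battlefieldValue v (fun i => if i = i₀ then q else p) i₀ =
      q * battlefieldValue v (fun i => if i = i₀ then 1 else p) i₀ +
        (1 - q) * battlefieldValue v (fun i => if i = i₀ then 0 else p) i₀ := by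
  unfold battlefieldValue
  simp_rw [prod_bidWeight_deviation, Finset.mul_sum, ← Finset.sum_add_distrib]
  refine Finset.sum_congr rfl fun c _ => ?_
  cases h : c i₀ <;> simp [bidWeight] <;> ring

theorem battlefieldValue_of_not_bid {k : ℕ} (v p : ℝ) (i₀ : Fin k) :
    battlefieldValue v (fun i => if i = i₀ then 0 else p) i₀ = v / k * (1 - p) ^ (k - 1) := by
  unfold battlefieldValue
  simp_rw [prod_bidWeight_deviation]
  rw [Finset.sum_eq_single fun _ => false]
  · simp [bidWeight, battlefieldPayoff, Finset.card_erase_of_mem]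
    ring
  · intro c _ hc
    cases h : c i₀
    · have : ¬ ∀ i, c i ≤ false := fun h' => hc (funext fun i => le_bot_iff.mp (h' i))
      rw [battlefieldPayoff, h, if_neg this, mul_zero]
    · simp [bidWeight]
  · simp

theorem battlefieldValue_of_unopposed_bid {k : ℕ} (v : ℝ) (i₀ : Fin k) :
    battlefieldValue v (fun i => if i = i₀ then 1 else 0) i₀ = v := by
  unfold battlefieldValue
  simp_rw [prod_bidWeight_deviation]
  rw [Finset.sum_eq_single fun i => decide (i = i₀)]
  · have h1 : ∏ i ∈ Finset.univ.erase i₀, bidWeight 0 (decide (i = i₀)) = 1 :=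
      Finset.prod_eq_one fun i hi => by simp [bidWeight, Finset.ne_of_mem_erase hi]
    have h2 : (Finset.univ.filter fun i' : Fin k =>
        ∀ i'', decide (i'' = i₀) ≤ decide (i' = i₀)) = {i₀} := by
      ext i
      simp only [Finset.mem_filter, Finset.mem_univ, true_and, Finset.mem_singleton]
      constructor
      · intro h
        simpa [Bool.le_iff_imp] using h i₀
      · rintro rfl
        simp [Bool.le_true]
    rw [h1, battlefieldPayoff, h2]
    simp [bidWeight, Bool.le_true]
  · intro c _ hc
    obtain ⟨i, hi⟩ := Function.ne_iff.mp hc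
    by_cases h : i = i₀
    · subst h
      have : c i = false := by simpa using hi
      simp [bidWeight, this]
    · have hi' : c i = true := by simpa [h] using hi
      rw [Finset.prod_eq_zero (i := i) (by simp [h]) (by simp [bidWeight, hi'])]
      simp
  · simp

theorem battlefieldValue_bid_sub_not_bid {k : ℕ} (v p : ℝ) (i₀ : Fin k) :
    battlefieldValue v (fun i => if i = i₀ then 1 else p) i₀ -
      battlefieldValue v (fun i => if i = i₀ then 0 else p) i₀ = mMarg k v p := by
  have hk : (k : ℝ) ≠ 0 := by
    have := i₀.2
    exact_mod_cast (by omega : k ≠ 0)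
  by_cases hp : p = 0
  · subst hp
    rw [battlefieldValue_of_unopposed_bid, battlefieldValue_of_not_bid, mMarg_zero]
    field_simp
    simp
  · have h := battlefieldValue_affine v p p i₀
    simp only [ite_self] at h
    rw [battlefieldValue_const] at h
    have h0 := battlefieldValue_of_not_bid v p i₀
    rw [mMarg, if_neg hp, ← mul_div_assoc, eq_div_iff hp]
    linear_combination -h - h0

theorem battlefieldValue_deviation_sub {k : ℕ} (v p q : ℝ) (i₀ : Fin k) :
    battlefieldValue v (fun i => if i = i₀ then q else p) i₀ -
      battlefieldValue v (fun _ => p) i₀ = (q - p) * mMarg k v p := by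
  have hp := battlefieldValue_affine v p p i₀
  simp only [ite_self] at hp
  rw [← battlefieldValue_bid_sub_not_bid v p i₀, hp, battlefieldValue_affine v p q i₀]
  ring

theorem real_apply_eq_bidWeight {n : ℕ} (μ : Measure (Fin n → Bool)) [IsProbabilityMeasure μ]
    (j : Fin n) (b : Bool) :
    (μ.map fun A => A j).real {b} = bidWeight (μ.real {A | A j = true}) b := by
  rw [map_measureReal_apply (by fun_prop) (measurableSet_singleton b)]
  cases b
  · have : (fun A : Fin n → Bool => A j) ⁻¹' {false} = {A | A j = true}ᶜ := by
      ext
      simp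
    rw [this, probReal_compl_eq_one_sub (Set.toFinite _).measurableSet]
    simp [bidWeight]
  · rfl

theorem boolExpectedPayoff_eq_sum {k n : ℕ} (v : Fin n → ℝ)
    (P : Fin k → Measure (Fin n → Bool)) (hP : ∀ i, IsProbabilityMeasure (P i)) (i₀ : Fin k) :
    boolExpectedPayoff v P hP i₀ =
      ∑ j, battlefieldValue (v j) (fun i => (P i).real {A | A j = true}) i₀ := by
  have := hP
  have hpay : ∀ A : Fin k → Fin n → Bool, boolBlottoPayoff v A i₀ =
      ∑ j, battlefieldPayoff (v j) (fun i => A i j) i₀ := fun A => rfl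
  unfold boolExpectedPayoff
  simp_rw [hpay]
  rw [integral_finsetSum _ fun j _ => Integrable.of_finite]
  refine Finset.sum_congr rfl fun j _ => ?_
  have hmeas : ∀ i, AEMeasurable (fun A : Fin n → Bool => A j) (P i) := fun i =>
    (measurable_pi_apply j).aemeasurable
  have : ∀ i, IsProbabilityMeasure ((P i).map fun A => A j) := fun i =>
    Measure.isProbabilityMeasure_map (hmeas i)
  have hmap := Measure.pi_map_pi (μ := P) (f := fun _ (A : Fin n → Bool) => A j) hmeas
  have hint := integral_map (μ := Measure.pi P)
    (φ := fun (A : Fin k → Fin n → Bool) (i : Fin k) => A i j)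
    (measurable_pi_lambda _ fun i =>
      (measurable_pi_apply j).comp (measurable_pi_apply i)).aemeasurable
    (f := fun c => battlefieldPayoff (v j) c i₀) (Integrable.of_finite).aestronglyMeasurable
  rw [← hint, hmap, integral_fintype Integrable.of_finite]
  refine Finset.sum_congr rfl fun c _ => ?_
  rw [smul_eq_mul, measureReal_def, Measure.pi_singleton, ENNReal.toReal_prod]
  congr 1
  exact Finset.prod_congr rfl fun i _ => real_apply_eq_bidWeight (P i) j (c i)

theorem sum_real_apply_le {n B : ℕ} (ν : Measure (Fin n → Bool)) [IsProbabilityMeasure ν]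
    (h : ∀ᵐ A ∂ν, ∑ j, (if A j then (1 : ℕ) else 0) ≤ B) :
    ∑ j, ν.real {A | A j = true} ≤ B := by
  have hj : ∀ j, ν.real {A | A j = true} = ∫ A, (if A j then (1 : ℝ) else 0) ∂ν := fun j => by
    rw [← integral_indicator_one (Set.toFinite _).measurableSet]
    simp [Set.indicator_apply]
  simp_rw [hj]
  rw [← integral_finsetSum _ fun j _ => Integrable.of_finite]
  calc ∫ A, ∑ j, (if A j then (1 : ℝ) else 0) ∂ν ≤ ∫ _, (B : ℝ) ∂ν := by
        refine integral_mono_ae Integrable.of_finite Integrable.of_finite ?_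
        filter_upwards [h] with A hA
        exact_mod_cast hA
    _ = B := by simp

theorem stmt15 (k n : ℕ) (hk : 3 ≤ k) (B : ℕ) (hB : B ≤ n)
    (v : Fin n → ℝ) (hv : ∀ j, 0 < v j)
    (hsorted : ∀ i j : Fin n, i ≤ j → v j ≤ v i)
    -- `minv j` is the extended inverse `m_{v_j}^{-1} : ℝ → [0,1]`:
    (minv : Fin n → ℝ → ℝ)
    (hminv_inv : ∀ j, ∀ p ∈ Set.Icc (0 : ℝ) 1, minv j (mMarg k (v j) p) = p)
    (hminv_lo : ∀ j, ∀ x : ℝ, x < v j / k → minv j x = 1)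
    (hminv_hi : ∀ j, ∀ x : ℝ, ((k : ℝ) - 1) * v j / k < x → minv j x = 0)
    -- `x* = inf {x : Σ_j m_{v_j}^{-1}(x) ≤ B}` and `p*_j = m_{v_j}^{-1}(x*)`:
    (xstar : ℝ) (hxstar : xstar = sInf {x : ℝ | ∑ j, minv j x ≤ (B : ℝ)})
    (pstar : Fin n → ℝ) (hpstar : ∀ j, pstar j = minv j xstar)
    -- `μ` is a mixed strategy, a.s. within budget, with marginals `p*_j`:
    (μ : Measure (Fin n → Bool)) (hμ : IsProbabilityMeasure μ)
    (hμbudget : ∀ᵐ A ∂μ, ∑ j, (if A j then (1 : ℕ) else 0) ≤ B)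
    (hμmarg : ∀ j, μ {A : Fin n → Bool | A j = true} = ENNReal.ofReal (pstar j)) :
    -- independent play of `μ` by all `k` players is a Nash equilibrium:
    ∀ i₀ : Fin k, ∀ (ν : Measure (Fin n → Bool)) (hν : IsProbabilityMeasure ν),
      (∀ᵐ A ∂ν, ∑ j, (if A j then (1 : ℕ) else 0) ≤ B) →
      boolExpectedPayoff v (devFamily i₀ μ ν) (devFamily_prob i₀ μ ν hμ hν) i₀ ≤
        boolExpectedPayoff v (fun _ => μ) (fun _ => hμ) i₀ := by
  intro i₀ ν hν hνbudget
  have hk2 : 2 ≤ k := by omega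
  have hg : ∀ j, IsExtendedInverse k (v j) (minv j) := fun j =>
    ⟨hminv_inv j, hminv_lo j, hminv_hi j⟩
  obtain ⟨hx0, hBle⟩ := sum_extendedInverse_sInf hk2 hB hv hg
  rw [← hxstar] at hx0 hBle
  have hp : ∀ j, μ.real {A | A j = true} = minv j xstar := fun j => by
    rw [measureReal_def, hμmarg, hpstar, ENNReal.toReal_ofReal ((hg j).mem_Icc hk2 _).1]
  have hq := sum_real_apply_le ν hνbudget
  have hdev : ∀ j i, (devFamily i₀ μ ν i).real {A | A j = true} =
      if i = i₀ then ν.real {A | A j = true} else minv j xstar := fun j i => by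
    unfold devFamily
    split_ifs
    · rfl
    · exact hp j
  rw [boolExpectedPayoff_eq_sum, boolExpectedPayoff_eq_sum, ← sub_nonpos,
    ← Finset.sum_sub_distrib]
  simp_rw [hdev, hp, battlefieldValue_deviation_sub]
  calc ∑ j, (ν.real {A | A j = true} - minv j xstar) * mMarg k (v j) (minv j xstar)
      ≤ ∑ j, (ν.real {A | A j = true} - minv j xstar) * xstar := by
        refine Finset.sum_le_sum fun j _ => ?_
        have := (hg j).sub_mul_sub_nonpos hk2 xstar (q := ν.real {A | A j = true})
          ⟨measureReal_nonneg, measureReal_le_one⟩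
        linarith
    _ = (∑ j, ν.real {A | A j = true} - ∑ j, minv j xstar) * xstar := by
        rw [← Finset.sum_mul, Finset.sum_sub_distrib]
    _ ≤ 0 := mul_nonpos_of_nonpos_of_nonneg (by linarith) hx0
end
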